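/- arXiv:0801.0233 — 2 statements merged into one kernel-verified Lean document; each statement's English description precedes it below -/
import Mathlib

section
/- Let λ, μ ∈ P_n and let m be any integer with m ≥ λ'_1 and m ≥ μ'_1 (the numbers of columns of λ and μ). Then d_{λ,n}^μ(y) = c_{μ^c, m}^{λ^c}(−y), where λ^c, μ^c ∈ P_m are the partitions complementary to λ and μ in the n×m rectangle, and −y = (−y_1, −y_2, …). -/
open Finset MvPolynomial

attribute [local instance] Classical.propDecidable

/-- A partition in `P_n`: a weakly decreasing sequence of naturals. -/
def IsPartition {n : ℕ} (lam : Fin n → ℕ) : Prop := Antitone lam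

/-- The cells of the Young diagram of `lam`, as pairs (row, column), 0-based. -/
noncomputable def cells {n : ℕ} (lam : Fin n → ℕ) : Finset (Fin n × ℕ) :=
  (Finset.univ ×ˢ Finset.range (Finset.univ.sup lam)).filter fun c => c.2 < lam c.1

/-- Semistandardness for a filling with values in `Fin n` (0-based values):
rows weakly increase, columns strictly increase. -/
def IsSSYT {n : ℕ} (lam : Fin n → ℕ) (T : cells lam → Fin n) : Prop :=
  (∀ c d : cells lam, (c : Fin n × ℕ).1 = (d : Fin n × ℕ).1 →
      (c : Fin n × ℕ).2 ≤ (d : Fin n × ℕ).2 → T c ≤ T d) ∧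
  (∀ c d : cells lam, (c : Fin n × ℕ).2 = (d : Fin n × ℕ).2 →
      (c : Fin n × ℕ).1 < (d : Fin n × ℕ).1 → T c < T d)

/-- The y-subscript `a + c(a) - r(a)` of a cell (1-based value and coordinates). -/
def ysub {n : ℕ} (a : Fin n) (c : Fin n × ℕ) : ℤ := (a : ℤ) + 1 + (c.2 : ℤ) - ((c.1 : ℕ) : ℤ)

/-- The Schur polynomial `s_lam(x_{(n)})`, in the ring with `x`-variables
`Sum.inl i` and `y`-variables `Sum.inr k` (`y_k` for `k ≥ 1`). -/
noncomputable def schurN (n : ℕ) (lam : Fin n → ℕ) : MvPolynomial (Fin n ⊕ ℤ) ℤ :=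
  ∑ T ∈ Finset.univ.filter (IsSSYT lam), ∏ c : cells lam, X (Sum.inl (T c))

/-- The factorial Schur polynomial `s_lam(x_{(n)} | y)`. -/
noncomputable def factSchurN (n : ℕ) (lam : Fin n → ℕ) : MvPolynomial (Fin n ⊕ ℤ) ℤ :=
  ∑ T ∈ Finset.univ.filter (IsSSYT lam),
    ∏ c : cells lam,
      (X (Sum.inl (T c)) + X (Sum.inr (ysub (T c) (c : Fin n × ℕ))))

/-- `e_d(y_1, …, y_p)`, the elementary symmetric polynomial in the variables
`y_1, …, y_p` (which is `0` for `d < 0` and for `d > p`, and `1` for `d = 0`),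
as a polynomial in the variables `y_k`, `k : ℤ`. -/
noncomputable def eY (p : ℕ) (d : ℤ) : MvPolynomial ℤ ℤ :=
  if 0 ≤ d then
    ∑ s ∈ Finset.powersetCard d.toNat ((Finset.range p).image fun k => (k + 1 : ℤ)),
      ∏ j ∈ s, X j
  else 0

/-- `h_d(-y_1, …, -y_p)`, the complete homogeneous symmetric polynomial of degree
`d` evaluated at the negated variables `-y_1, …, -y_p` (and `0` for `d < 0`). -/
noncomputable def hYneg (p : ℕ) (d : ℤ) : MvPolynomial ℤ ℤ :=
  if 0 ≤ d then
    ∑ m ∈ (Finset.range p).sym d.toNat,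
      ((m : Multiset ℕ).map fun k => -(X (k + 1 : ℤ) : MvPolynomial ℤ ℤ)).prod
  else 0

/-- The partition `λ^c ∈ P_m` complementary to `λ ∈ P_n` in the `n × m` rectangle:
`λ^c_i = n - λ'_{m+1-i}` (1-based), where `λ'_j = #{k : λ_k ≥ j}` is the conjugate. -/
noncomputable def conjComp (n m : ℕ) (lam : Fin n → ℕ) : Fin m → ℕ :=
  fun i => n - (Finset.univ.filter fun k : Fin n => m - (i : ℕ) ≤ lam k).card

/-!
By the bialternant formula, `s_λ(x | a)` times the Vandermonde product is the determinant of the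
factorial powers `(x_i | a)^(λ_j + n - j)`. Applying to it, in each variable, the functionals dual
to the Newton basis `(t | b)^l` shows that the coefficient of `s_μ(x | b)` in `s_λ(x | a)` is a
minor of the transition matrix between the Newton bases for `a` and `b`: its rows are the numbers
`λ_j + n - j` and its columns the numbers `μ_j + n - j`. The analogous numbers for `λ^c` are the
complement of those for `λ` in `{0, …, n + m - 1}`, so Jacobi's theorem on complementary minors of
inverse matrices turns this coefficient into the one of `s_{λ^c}` in `s_{μ^c}`, with `a` and `b`
exchanged; replacing `a, b` by `-a, -b` absorbs the sign.
-/

section Determinants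

variable {R : Type*} [CommRing R]

theorem det_eq_of_forall_col_eq_smul_add_succ {n : ℕ} {A B : Matrix (Fin (n + 1)) (Fin (n + 1)) R}
    (c : Fin n → R) (A_last : ∀ i, A i (Fin.last n) = B i (Fin.last n))
    (A_castSucc : ∀ (i) (j : Fin n), A i j.castSucc = B i j.castSucc + c j * A i j.succ) :
    A.det = B.det := by
  rw [← Matrix.det_submatrix_equiv_self Fin.revPerm A,
    ← Matrix.det_submatrix_equiv_self Fin.revPerm B]
  refine Matrix.det_eq_of_forall_col_eq_smul_add_pred (fun j => c j.rev) (fun i => ?_) fun i j => ?_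
  · simpa using A_last i.rev
  · simpa [Fin.rev_succ, Fin.rev_castSucc] using A_castSucc i.rev j.rev

theorem det_eq_mul_det_of_last_row {n : ℕ} (B : Matrix (Fin (n + 1)) (Fin (n + 1)) R)
    (h : ∀ j : Fin n, B (Fin.last n) j.castSucc = 0) :
    B.det = B (Fin.last n) (Fin.last n) * (B.submatrix Fin.castSucc Fin.castSucc).det := by
  rw [Matrix.det_succ_row B (Fin.last n), Fin.sum_univ_castSucc]
  simp [h, Fin.succAbove_last, ← two_mul]

theorem det_of_sum_finset_col {n : Type*} [Fintype n] [DecidableEq n] {ι : Type*} (s : n → Finset ι)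
    (g : n → ι → n → R) :
    (Matrix.of fun i j => ∑ a ∈ s j, g j a i).det =
      ∑ a ∈ Fintype.piFinset s, (Matrix.of fun i j => g j (a j) i).det := by
  have h := (Matrix.detRowAlternating (n := n) (R := R)).toMultilinearMap.map_sum_finset g s
  simp only [← Matrix.det_transpose (Matrix.of _)]
  refine Eq.trans (congrArg Matrix.det ?_) h
  ext j i
  simp

theorem det_of_ite_eq {n : ℕ} {α : Type*} [PartialOrder α] [DecidableEq α]
    {f g : Fin n → α} (hf : StrictAnti f) (hg : StrictAnti g) :
    (Matrix.of fun i j => if f i = g j then (1 : R) else 0).det = if f = g then 1 else 0 := by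
  split_ifs with h
  · rw [h]
    refine (congrArg Matrix.det ?_).trans Matrix.det_one
    ext i j
    simp only [Matrix.of_apply, hg.injective.eq_iff, Matrix.one_apply]
  · have hrange : ¬ univ.image g ⊆ univ.image f := fun hsub => h <| hf.range_inj hg |>.1 <| by
      have himage : univ.image g = univ.image f := eq_of_subset_of_card_le hsub
        (by rw [card_image_of_injective _ hf.injective, card_image_of_injective _ hg.injective])
      simpa using congrArg (fun s : Finset α => (s : Set α)) himage.symm
    obtain ⟨_, hj, hne⟩ := Finset.not_subset.1 hrange
    obtain ⟨j, -, rfl⟩ := mem_image.1 hj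
    refine Matrix.det_eq_zero_of_column_eq_zero j fun i => ?_
    exact if_neg fun hij : f i = g j => hne (hij ▸ mem_image_of_mem f (mem_univ i))

theorem det_submatrix_eq_sign_mul {ι κ : Type*} [Fintype ι] [DecidableEq ι] [Fintype κ]
    [DecidableEq κ] (M : Matrix κ κ R) (s e f : ι ≃ κ) :
    (M.submatrix f e).det =
      (Equiv.Perm.sign (s.symm.trans f) : ℤ) * (Equiv.Perm.sign (s.symm.trans e) : ℤ) * M.det := by
  have h : M.submatrix f e =
      ((M.submatrix (s.symm.trans f) id).submatrix id (s.symm.trans e)).submatrix s s := by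
    ext i j
    simp
  rw [h, Matrix.det_submatrix_equiv_self, Matrix.det_permute', Matrix.det_permute]
  ring

theorem jacobi_complementary_minor {ι κ ν : Type*} [Fintype ι] [Fintype κ] [Fintype ν]
    [DecidableEq ι] [DecidableEq κ] [DecidableEq ν] {M M' : Matrix ν ν R} (h : M * M' = 1)
    (e f : ι ⊕ κ ≃ ν) :
    (M.submatrix f e).det * (M'.submatrix (e ∘ Sum.inl) (f ∘ Sum.inl)).det =
      (M.submatrix (f ∘ Sum.inr) (e ∘ Sum.inr)).det := by
  set P := M.submatrix f e with hP
  set Q := M'.submatrix e f with hQ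
  have hPQ : P * Q = 1 := by
    rw [hP, hQ, Matrix.submatrix_mul_equiv, h, Matrix.submatrix_one_equiv]
  rw [← Matrix.fromBlocks_toBlocks P, ← Matrix.fromBlocks_toBlocks Q, Matrix.fromBlocks_multiply,
    ← Matrix.fromBlocks_one, Matrix.fromBlocks_inj] at hPQ
  obtain ⟨h₁₁, -, h₂₁, -⟩ := hPQ
  have hmul : P * Matrix.fromBlocks Q.toBlocks₁₁ 0 Q.toBlocks₂₁ 1 =
      Matrix.fromBlocks 1 P.toBlocks₁₂ 0 P.toBlocks₂₂ := by
    conv_lhs => rw [← Matrix.fromBlocks_toBlocks P]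
    rw [Matrix.fromBlocks_multiply, h₁₁, h₂₁]
    simp
  have hdet := congrArg Matrix.det hmul
  rwa [Matrix.det_mul, Matrix.det_fromBlocks_zero₁₂, Matrix.det_fromBlocks_zero₂₁, Matrix.det_one,
    Matrix.det_one, mul_one, one_mul] at hdet

end Determinants

section Shuffles

variable {n m : ℕ}

theorem sign_eq_prod_inversions (σ : Equiv.Perm (Fin n)) :
    Equiv.Perm.sign σ = ∏ j, (-1 : ℤˣ) ^ #{i ∈ Iio j | σ j < σ i} := by
  rw [Equiv.Perm.sign_eq_prod_prod_Iio]
  refine prod_congr rfl fun j _ => ?_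
  rw [← prod_const, prod_filter]
  refine prod_congr rfl fun i hi => ?_
  have hne : σ i ≠ σ j := σ.injective.ne (mem_Iio.1 hi).ne
  by_cases h : σ i < σ j
  · rw [if_pos h, if_neg h.not_gt]
  · rw [if_neg h, if_pos (lt_of_le_of_ne (not_lt.1 h) hne.symm)]

theorem sign_shuffle_of_strictAnti {e : Fin n ⊕ Fin m ≃ Fin (n + m)}
    (hl : StrictAnti (e ∘ Sum.inl)) (hr : StrictAnti (e ∘ Sum.inr)) :
    Equiv.Perm.sign (finSumFinEquiv.symm.trans e) =
      (∏ i : Fin n, (-1 : ℤˣ) ^ (i : ℕ)) *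
        ∏ j : Fin m, (-1 : ℤˣ) ^ (n + m - 1 - e (Sum.inr j) : ℕ) := by
  set σ := finSumFinEquiv.symm.trans e with hσ
  have σ_inl (i : Fin n) : σ (Fin.castAdd m i) = e (Sum.inl i) := by simp [hσ]
  have σ_inr (j : Fin m) : σ (Fin.natAdd n j) = e (Sum.inr j) := by simp [hσ]
  have inl_lt_inr (i : Fin n) (j : Fin m) : Fin.castAdd m i < Fin.natAdd n j := by
    rw [Fin.lt_def, Fin.val_castAdd, Fin.val_natAdd]
    omega
  rw [sign_eq_prod_inversions, Fin.prod_univ_add]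
  congr 1 <;> refine prod_congr rfl fun k _ => congrArg _ ?_
  · have inversions_eq : {i ∈ Iio (Fin.castAdd m k) | σ (Fin.castAdd m k) < σ i} =
        Iio (Fin.castAdd m k) := by
      refine filter_true_of_mem fun i hi => ?_
      induction i using Fin.addCases with
      | left i =>
        have hik : i < k := (Fin.strictMono_castAdd m).lt_iff_lt.1 (mem_Iio.1 hi)
        rw [σ_inl, σ_inl]
        exact hl hik
      | right j => exact absurd (mem_Iio.1 hi) (inl_lt_inr k j).not_gt
    rw [inversions_eq, Fin.card_Iio, Fin.val_castAdd]
  · have inversions_eq : {i ∈ Iio (Fin.natAdd n k) | σ (Fin.natAdd n k) < σ i} =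
        (Ioi (e (Sum.inr k))).map σ.symm.toEmbedding := by
      ext i
      rw [mem_map_equiv, Equiv.symm_symm, mem_filter, mem_Iio, mem_Ioi, σ_inr,
        and_iff_right_iff_imp]
      intro hi
      induction i using Fin.addCases with
      | left i => exact inl_lt_inr i k
      | right j => exact (Fin.strictMono_natAdd n) (hr.lt_iff_gt.1 (by rwa [σ_inr] at hi))
    rw [inversions_eq, card_map, Fin.card_Ioi]

theorem sign_shuffle_mul_sign_shuffle {e f : Fin n ⊕ Fin m ≃ Fin (n + m)}
    (he_inl : StrictAnti (e ∘ Sum.inl)) (he_inr : StrictAnti (e ∘ Sum.inr))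
    (hf_inl : StrictAnti (f ∘ Sum.inl)) (hf_inr : StrictAnti (f ∘ Sum.inr)) :
    Equiv.Perm.sign (finSumFinEquiv.symm.trans f) * Equiv.Perm.sign (finSumFinEquiv.symm.trans e) =
      ∏ j : Fin m, (-1 : ℤˣ) ^ (f (Sum.inr j) + e (Sum.inr j) : ℕ) := by
  rw [sign_shuffle_of_strictAnti he_inl he_inr, sign_shuffle_of_strictAnti hf_inl hf_inr,
    mul_mul_mul_comm, Int.units_mul_self, one_mul, ← prod_mul_distrib]
  refine prod_congr rfl fun j _ => ?_
  rw [← pow_add]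
  refine neg_one_pow_congr ?_
  grind

theorem det_submatrix_checkerboard {R : Type*} [CommRing R] {N : ℕ} (M : Matrix (Fin N) (Fin N) R)
    (p q : Fin m → Fin N) :
    ((Matrix.of fun k l : Fin N => (-1) ^ (k + l : ℕ) * M k l).submatrix p q).det =
      (∏ j, (-1) ^ (p j + q j : ℕ)) * (M.submatrix p q).det := by
  have hmat : (Matrix.of fun k l : Fin N => (-1) ^ (k + l : ℕ) * M k l).submatrix p q =
      Matrix.of fun i j => (-1) ^ (p i : ℕ) *
        Matrix.of (fun i j => (-1) ^ (q j : ℕ) * M.submatrix p q i j) i j := by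
    ext i j
    simp only [Matrix.submatrix_apply, Matrix.of_apply, pow_add, mul_assoc]
  rw [hmat, Matrix.det_mul_column, Matrix.det_mul_row, ← mul_assoc, ← prod_mul_distrib]
  simp only [pow_add]

theorem jacobi_complementary_minor_checkerboard {R : Type*} [CommRing R]
    {M M' : Matrix (Fin (n + m)) (Fin (n + m)) R} (hM : M.det = 1) (h : M * M' = 1)
    {e f : Fin n ⊕ Fin m ≃ Fin (n + m)}
    (he_inl : StrictAnti (e ∘ Sum.inl)) (he_inr : StrictAnti (e ∘ Sum.inr))
    (hf_inl : StrictAnti (f ∘ Sum.inl)) (hf_inr : StrictAnti (f ∘ Sum.inr)) :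
    (M'.submatrix (e ∘ Sum.inl) (f ∘ Sum.inl)).det =
      ((Matrix.of fun k l : Fin (n + m) => (-1) ^ (k + l : ℕ) * M k l).submatrix
        (f ∘ Sum.inr) (e ∘ Sum.inr)).det := by
  set ε : R := ∏ j : Fin m, (-1) ^ (f (Sum.inr j) + e (Sum.inr j) : ℕ) with hε
  have ε_mul_self : ε * ε = 1 := by
    rw [hε, ← prod_mul_distrib]
    exact prod_eq_one fun j _ => by rw [← mul_pow, neg_one_mul, neg_neg, one_pow]
  have det_submatrix : (M.submatrix f e).det = ε := by
    rw [det_submatrix_eq_sign_mul M finSumFinEquiv e f, hM, mul_one, ← Int.cast_mul,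
      ← Units.val_mul, sign_shuffle_mul_sign_shuffle he_inl he_inr hf_inl hf_inr]
    simp [hε]
  calc (M'.submatrix (e ∘ Sum.inl) (f ∘ Sum.inl)).det
      = ε * (ε * (M'.submatrix (e ∘ Sum.inl) (f ∘ Sum.inl)).det) := by
        rw [← mul_assoc, ε_mul_self, one_mul]
    _ = ε * (M.submatrix (f ∘ Sum.inr) (e ∘ Sum.inr)).det := by
        rw [← jacobi_complementary_minor h e f, det_submatrix]
    _ = _ := (det_submatrix_checkerboard M _ _).symm

end Shuffles

section FactorialPowers

variable {A : Type*} [CommRing A]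

/-- The factorial power `(t | y)^k = (t + y_1) ⋯ (t + y_k)`. -/
def factorialPower (y : ℤ → A) (k : ℕ) (t : A) : A :=
  ∏ p ∈ range k, (t + y (p + 1))

@[simp]
theorem factorialPower_zero (y : ℤ → A) (t : A) : factorialPower y 0 t = 1 :=
  prod_range_zero _

theorem factorialPower_succ (y : ℤ → A) (k : ℕ) (t : A) :
    factorialPower y (k + 1) t = factorialPower y k t * (t + y (k + 1)) :=
  prod_range_succ _ k

-- Both sides are polynomials in `t` vanishing at `t = z`; the right-hand side is the quotient.
theorem factorialPower_sub_eq_sub_mul_sum (y : ℤ → A) (t z : A) {k u w : ℕ} (huw : u ≤ w) :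
    factorialPower y (w + k + 1) t -
        (∏ c ∈ Ico u (w + 1), (z + y (c + k + 1))) * factorialPower y (u + k) t =
      (t - z) * ∑ a ∈ Icc u w,
        factorialPower y (a + k) t * ∏ c ∈ Ico a w, (z + y (c + k + 2)) := by
  induction w, huw using Nat.le_induction with
  | base =>
    rw [factorialPower_succ, Nat.Ico_succ_singleton, prod_singleton, Icc_self, sum_singleton,
      Ico_self, prod_empty]
    push_cast
    ring
  | succ w huw ih =>
    have sum_succ : ∑ a ∈ Icc u (w + 1),
          factorialPower y (a + k) t * ∏ c ∈ Ico a (w + 1), (z + y (c + k + 2)) =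
        (∑ a ∈ Icc u w, factorialPower y (a + k) t * ∏ c ∈ Ico a w, (z + y (c + k + 2))) *
          (z + y (w + k + 2)) + factorialPower y (w + 1 + k) t := by
      rw [sum_Icc_succ_top (by omega), Ico_self, prod_empty, mul_one, sum_mul]
      congr 1
      refine sum_congr rfl fun a ha => ?_
      rw [prod_Ico_succ_top (mem_Icc.1 ha).2, mul_assoc]
    rw [sum_succ, mul_add, ← mul_assoc, ← ih, factorialPower_succ, prod_Ico_succ_top (by omega),
      add_right_comm w 1 k]
    push_cast
    ring_nf

end FactorialPowers

section Alternants

variable {A : Type*} [CommRing A] {n : ℕ}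

/-- The strictly decreasing sequence `λ_j + n - j` (with `j` counted from `1`). -/
def betaNumbers (lam : Fin n → ℕ) (j : Fin n) : ℕ :=
  lam j + j.rev

theorem strictAnti_betaNumbers {lam : Fin n → ℕ} (hlam : Antitone lam) :
    StrictAnti (betaNumbers lam) := fun _ _ hij =>
  add_lt_add_of_le_of_lt (hlam hij.le) (Fin.rev_lt_rev.2 hij)

theorem betaNumbers_injective : Function.Injective (betaNumbers (n := n)) := fun _ _ h =>
  funext fun j => Nat.add_right_cancel (congrFun h j)

/-- The numerator `det ((x_i | y)^(λ_j + n - j))` of the bialternant formula. -/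
def alternant (lam : Fin n → ℕ) (x : Fin n → A) (y : ℤ → A) : A :=
  (Matrix.of fun i j => factorialPower y (betaNumbers lam j) (x i)).det

/-- The partitions `μ` interlacing with `λ`, i.e. `λ_1 ≥ μ_1 ≥ λ_2 ≥ ⋯ ≥ μ_n ≥ λ_{n+1}`. -/
def interlacing (lam : Fin (n + 1) → ℕ) : Finset (Fin n → ℕ) :=
  Fintype.piFinset fun j => Icc (lam j.succ) (lam j.castSucc)

/-- The contribution of a horizontal strip `λ/μ` of entries `n + 1`, all with weight `z`,
to the factorial Schur polynomial. -/
def stripWeight (lam : Fin (n + 1) → ℕ) (mu : Fin n → ℕ) (z : A) (y : ℤ → A) : A :=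
  ∏ j, ∏ c ∈ Ico (Fin.snoc (α := fun _ => ℕ) mu 0 j) (lam j), (z + y (ysub (Fin.last n) (j, c)))

theorem stripWeight_eq_prod_mul_factorialPower (lam : Fin (n + 1) → ℕ) (mu : Fin n → ℕ) (z : A)
    (y : ℤ → A) :
    stripWeight lam mu z y =
      (∏ j : Fin n, ∏ c ∈ Ico (mu j) (lam j.castSucc), (z + y (c + j.rev + 2))) *
        factorialPower y (lam (Fin.last n)) z := by
  rw [stripWeight, Fin.prod_univ_castSucc, factorialPower, range_eq_Ico]
  simp only [Fin.snoc_castSucc, Fin.snoc_last, ysub]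
  congr 1
  · refine prod_congr rfl fun j _ => prod_congr rfl fun c _ => ?_
    congr 2
    simp only [Fin.val_last, Fin.val_castSucc, Fin.val_rev]
    omega
  · refine prod_congr rfl fun c _ => ?_
    congr 2
    simp only [Fin.val_last]
    ring

theorem alternant_eq_factorialPower_mul_det {lam : Fin (n + 1) → ℕ} (hlam : Antitone lam)
    (x : Fin (n + 1) → A) (y : ℤ → A) :
    alternant lam x y = factorialPower y (lam (Fin.last n)) (x (Fin.last n)) *
      (Matrix.of fun i j : Fin n => (x i.castSucc - x (Fin.last n)) *
        ∑ a ∈ Icc (lam j.succ) (lam j.castSucc), factorialPower y (a + j.rev) (x i.castSucc) *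
          ∏ c ∈ Ico a (lam j.castSucc), (x (Fin.last n) + y (c + j.rev + 2))).det := by
  set z := x (Fin.last n) with hz
  set ratio : Fin n → A := fun j =>
    ∏ c ∈ Ico (lam j.succ) (lam j.castSucc + 1), (z + y (c + j.rev + 1)) with hratio
  have beta_castSucc (j : Fin n) : betaNumbers lam j.castSucc = lam j.castSucc + j.rev + 1 := by
    simp only [betaNumbers, Fin.rev_castSucc, Fin.val_succ, add_assoc]
  have beta_succ (j : Fin n) : betaNumbers lam j.succ = lam j.succ + j.rev := by
    simp only [betaNumbers, Fin.rev_succ, Fin.val_castSucc]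
  have beta_last : betaNumbers lam (Fin.last n) = lam (Fin.last n) := by
    simp [betaNumbers]
  -- Subtracting from each column a multiple of the next one clears the last row.
  set B : Matrix (Fin (n + 1)) (Fin (n + 1)) A := Matrix.of fun i =>
    Fin.snoc (fun j => factorialPower y (betaNumbers lam j.castSucc) (x i) -
      ratio j * factorialPower y (betaNumbers lam j.succ) (x i))
      (factorialPower y (betaNumbers lam (Fin.last n)) (x i)) with hB
  have B_last (i : Fin (n + 1)) :
      B i (Fin.last n) = factorialPower y (lam (Fin.last n)) (x i) := by
    rw [hB, Matrix.of_apply, Fin.snoc_last, beta_last]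
  have B_castSucc (i : Fin (n + 1)) (j : Fin n) : B i j.castSucc = (x i - z) *
      ∑ a ∈ Icc (lam j.succ) (lam j.castSucc), factorialPower y (a + j.rev) (x i) *
        ∏ c ∈ Ico a (lam j.castSucc), (z + y (c + j.rev + 2)) := by
    rw [← factorialPower_sub_eq_sub_mul_sum y (x i) z (hlam j.castSucc_lt_succ.le), hB,
      Matrix.of_apply, Fin.snoc_castSucc, beta_castSucc, beta_succ, hratio]
  have det_eq : alternant lam x y = B.det :=
    det_eq_of_forall_col_eq_smul_add_succ ratio (fun i => by simp [hB]) fun i j => by simp [hB]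
  rw [det_eq, det_eq_mul_det_of_last_row B fun j => by rw [B_castSucc, ← hz, sub_self, zero_mul],
    B_last]
  congr 2
  ext i j
  rw [Matrix.submatrix_apply, B_castSucc, Matrix.of_apply]

theorem alternant_eq_mul_sum_interlacing {lam : Fin (n + 1) → ℕ} (hlam : Antitone lam)
    (x : Fin (n + 1) → A) (y : ℤ → A) :
    alternant lam x y =
      (∏ i : Fin n, (x i.castSucc - x (Fin.last n))) * ∑ mu ∈ interlacing lam,
        alternant mu (x ∘ Fin.castSucc) y * stripWeight lam mu (x (Fin.last n)) y := by
  set z := x (Fin.last n)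
  set w : Fin n → ℕ → A := fun j a => ∏ c ∈ Ico a (lam j.castSucc), (z + y (c + j.rev + 2)) with hw
  have det_term (mu : Fin n → ℕ) : (Matrix.of fun i j : Fin n =>
      factorialPower y (mu j + j.rev) (x i.castSucc) * w j (mu j)).det =
        alternant mu (x ∘ Fin.castSucc) y * ∏ j, w j (mu j) := by
    rw [alternant, mul_comm, ← Matrix.det_mul_row]
    congr 1
    ext i j
    exact mul_comm _ _
  have det_sum := det_of_sum_finset_col (fun j : Fin n => Icc (lam j.succ) (lam j.castSucc))
    fun j a i => factorialPower y (a + j.rev) (x i.castSucc) * w j a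
  simp only [det_term] at det_sum
  rw [alternant_eq_factorialPower_mul_det hlam]
  have factor_rows := Matrix.det_mul_column (fun i => x i.castSucc - z) (Matrix.of fun i j =>
    ∑ a ∈ Icc (lam j.succ) (lam j.castSucc), factorialPower y (a + j.rev) (x i.castSucc) * w j a)
  simp only [Matrix.of_apply] at factor_rows
  rw [factor_rows, det_sum, mul_left_comm, mul_sum, interlacing]
  congr 1
  refine sum_congr rfl fun mu _ => ?_
  rw [stripWeight_eq_prod_mul_factorialPower, hw]
  ring

end Alternants

section Tableaux

variable {n : ℕ}

theorem mem_cells {lam : Fin n → ℕ} {p : Fin n × ℕ} : p ∈ cells lam ↔ p.2 < lam p.1 := by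
  rw [cells, mem_filter, mem_product, mem_range, and_iff_right_iff_imp]
  exact fun h => ⟨mem_univ _, h.trans_le (le_sup (mem_univ p.1))⟩

theorem prod_cells {A : Type*} [CommMonoid A] (lam : Fin n → ℕ) (f : Fin n × ℕ → A) :
    ∏ p ∈ cells lam, f p = ∏ j, ∏ c ∈ range (lam j), f (j, c) :=
  prod_finset_product (cells lam) univ (fun j => range (lam j)) fun p => by simp [mem_cells]

theorem IsSSYT.row_le {lam : Fin n → ℕ} (hlam : Antitone lam) {T : cells lam → Fin n}
    (hT : IsSSYT lam T) (p : cells lam) : p.1.1 ≤ T p := by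
  obtain ⟨⟨⟨r, hr⟩, c⟩, hp⟩ := p
  rw [Fin.le_def]
  induction r with
  | zero => exact Nat.zero_le _
  | succ r ih =>
    have hrc : ((⟨r, by omega⟩ : Fin n), c) ∈ cells lam :=
      mem_cells.2 <| (mem_cells.1 hp).trans_le <| hlam <| Fin.mk_le_mk.2 r.le_succ
    exact (ih (by omega) hrc).trans_lt (hT.2 ⟨_, hrc⟩ ⟨_, hp⟩ rfl (Fin.mk_lt_mk.2 r.lt_succ_self))

/-- The shape formed by the entries of a tableau `T` other than `n + 1` (that is, `Fin.last n`). -/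
noncomputable def innerShape {lam : Fin (n + 1) → ℕ} (T : cells lam → Fin (n + 1)) (j : Fin n) :
    ℕ :=
  sInf {c | ∀ h : (j.castSucc, c) ∈ cells lam, T ⟨_, h⟩ = Fin.last n}

theorem IsSSYT.lt_innerShape_iff {lam : Fin (n + 1) → ℕ} {T : cells lam → Fin (n + 1)}
    (hT : IsSSYT lam T) {j : Fin n} {c : ℕ} (h : (j.castSucc, c) ∈ cells lam) :
    c < innerShape T j ↔ T ⟨_, h⟩ ≠ Fin.last n := by
  constructor
  · intro hc hlast
    exact Nat.notMem_of_lt_sInf hc fun _ => hlast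
  · contrapose!
    intro hc
    have hmem : (j.castSucc, innerShape T j) ∈ cells lam :=
      mem_cells.2 (hc.trans_lt (mem_cells.1 h))
    have hlast : T ⟨_, hmem⟩ = Fin.last n :=
      Nat.sInf_mem (s := {c | ∀ h : (j.castSucc, c) ∈ cells lam, T ⟨_, h⟩ = Fin.last n})
        ⟨lam j.castSucc, fun h => absurd (mem_cells.1 h) (lt_irrefl _)⟩ hmem
    exact Fin.last_le_iff.1 (hlast ▸ hT.1 ⟨_, hmem⟩ ⟨_, h⟩ rfl hc)

theorem mem_interlacing {lam : Fin (n + 1) → ℕ} {mu : Fin n → ℕ} :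
    mu ∈ interlacing lam ↔ ∀ j, lam j.succ ≤ mu j ∧ mu j ≤ lam j.castSucc := by
  simp only [interlacing, Fintype.mem_piFinset, mem_Icc]

theorem antitone_of_mem_interlacing {lam : Fin (n + 1) → ℕ} (hlam : Antitone lam) {mu : Fin n → ℕ}
    (hmu : mu ∈ interlacing lam) : Antitone mu := by
  rw [mem_interlacing] at hmu
  intro i j hij
  rcases hij.eq_or_lt with rfl | hlt
  · exact le_rfl
  · exact ((hmu j).2.trans (hlam (Fin.succ_le_castSucc_iff.2 hlt))).trans (hmu i).1

theorem IsSSYT.innerShape_mem_interlacing {lam : Fin (n + 1) → ℕ} {T : cells lam → Fin (n + 1)}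
    (hlam : Antitone lam) (hT : IsSSYT lam T) : innerShape T ∈ interlacing lam := by
  refine mem_interlacing.2 fun j => ⟨?_, ?_⟩
  · by_contra! hlt
    have hsucc : (j.succ, innerShape T j) ∈ cells lam := mem_cells.2 hlt
    have hcast : (j.castSucc, innerShape T j) ∈ cells lam :=
      mem_cells.2 (hlt.trans_le (hlam j.castSucc_lt_succ.le))
    have hT_lt := hT.2 ⟨_, hcast⟩ ⟨_, hsucc⟩ rfl j.castSucc_lt_succ
    exact lt_irrefl _ ((hT.lt_innerShape_iff hcast).2 (Fin.ne_last_of_lt hT_lt))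
  · exact Nat.sInf_le fun h => absurd (mem_cells.1 h) (lt_irrefl _)

/-- The extension of a tableau of shape `μ` by entries `n + 1` (that is, `Fin.last n`) to all
cells of the plane. -/
noncomputable def extendByLast {mu : Fin n → ℕ} (T : cells mu → Fin n) (p : Fin (n + 1) × ℕ) :
    Fin (n + 1) :=
  Fin.lastCases (Fin.last n)
    (fun j => if h : (j, p.2) ∈ cells mu then (T ⟨_, h⟩).castSucc else Fin.last n) p.1

section ExtendByLast

variable {mu : Fin n → ℕ} (T : cells mu → Fin n)

theorem extendByLast_last (c : ℕ) : extendByLast T (Fin.last n, c) = Fin.last n :=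
  Fin.lastCases_last

theorem extendByLast_of_mem {j : Fin n} {c : ℕ} (h : (j, c) ∈ cells mu) :
    extendByLast T (j.castSucc, c) = (T ⟨_, h⟩).castSucc := by
  rw [extendByLast, Fin.lastCases_castSucc, dif_pos h]

theorem extendByLast_of_notMem {j : Fin n} {c : ℕ} (h : (j, c) ∉ cells mu) :
    extendByLast T (j.castSucc, c) = Fin.last n := by
  rw [extendByLast, Fin.lastCases_castSucc, dif_neg h]

variable {T} {lam : Fin (n + 1) → ℕ}

theorem isSSYT_extendByLast (hlam : Antitone lam) (hmu : mu ∈ interlacing lam) (hT : IsSSYT mu T) :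
    IsSSYT lam fun p => extendByLast T p := by
  constructor
  · rintro ⟨⟨r, c⟩, hc⟩ ⟨⟨_, c'⟩, hc'⟩ rfl (hcc' : c ≤ c')
    induction r using Fin.lastCases with
    | last => simp only [extendByLast_last, le_refl]
    | cast j =>
      by_cases h' : (j, c') ∈ cells mu
      · have h : (j, c) ∈ cells mu := mem_cells.2 (hcc'.trans_lt (mem_cells.1 h'))
        simpa only [extendByLast_of_mem T h, extendByLast_of_mem T h',
          Fin.castSucc_le_castSucc_iff] using hT.1 ⟨_, h⟩ ⟨_, h'⟩ rfl hcc'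
      · simp only [extendByLast_of_notMem T h', Fin.le_last]
  · rintro ⟨⟨r, c⟩, hc⟩ ⟨⟨r', _⟩, hc'⟩ rfl (hrr' : r < r')
    obtain ⟨j, rfl⟩ := Fin.exists_castSucc_eq.2 (Fin.ne_last_of_lt hrr')
    have h : (j, c) ∈ cells mu := mem_cells.2 <| (mem_cells.1 hc').trans_le <|
      (hlam (Fin.castSucc_lt_iff_succ_le.1 hrr')).trans (mem_interlacing.1 hmu j).1
    induction r' using Fin.lastCases with
    | last => simp only [extendByLast_of_mem T h, extendByLast_last, Fin.castSucc_lt_last]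
    | cast j' =>
      by_cases h' : (j', c) ∈ cells mu
      · simpa only [extendByLast_of_mem T h, extendByLast_of_mem T h',
          Fin.castSucc_lt_castSucc_iff] using hT.2 ⟨_, h⟩ ⟨_, h'⟩ rfl hrr'
      · simp only [extendByLast_of_mem T h, extendByLast_of_notMem T h', Fin.castSucc_lt_last]

theorem innerShape_extendByLast (hmu : mu ∈ interlacing lam) :
    innerShape (fun p : cells lam => extendByLast T p) = mu := by
  funext j
  have setOf_eq : {c | ∀ _ : (j.castSucc, c) ∈ cells lam,
      extendByLast T (j.castSucc, c) = Fin.last n} = Set.Ici (mu j) := by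
    ext c
    refine ⟨fun h => ?_, fun h _ => extendByLast_of_notMem T (mem_cells.not.2 (not_lt.2 h))⟩
    by_contra hc
    have hlt : c < mu j := not_le.1 hc
    have hlast := h (mem_cells.2 (hlt.trans_le (mem_interlacing.1 hmu j).2))
    rw [extendByLast_of_mem T (mem_cells.2 hlt)] at hlast
    exact Fin.castSucc_ne_last _ hlast
  rw [innerShape, setOf_eq, csInf_Ici]

theorem extendByLast_injective (hmu : mu ∈ interlacing lam) {T T' : cells mu → Fin n}
    (h : (fun p : cells lam => extendByLast T p) = fun p : cells lam => extendByLast T' p) :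
    T = T' := by
  funext p
  have hp : (p.1.1.castSucc, p.1.2) ∈ cells lam :=
    mem_cells.2 ((mem_cells.1 p.2).trans_le (mem_interlacing.1 hmu _).2)
  have heq := congrFun h ⟨_, hp⟩
  simp only [extendByLast_of_mem _ p.2] at heq
  exact Fin.castSucc_injective _ heq

theorem IsSSYT.exists_extendByLast_eq (hlam : Antitone lam) {T : cells lam → Fin (n + 1)}
    (hT : IsSSYT lam T) :
    ∃ T' : cells (innerShape T) → Fin n,
      IsSSYT (innerShape T) T' ∧ (fun p : cells lam => extendByLast T' p) = T := by
  have hmu := mem_interlacing.1 (hT.innerShape_mem_interlacing hlam)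
  set emb : cells (innerShape T) → cells lam := fun p =>
    ⟨(p.1.1.castSucc, p.1.2), mem_cells.2 ((mem_cells.1 p.2).trans_le (hmu _).2)⟩
  have T_emb_ne (p : cells (innerShape T)) : T (emb p) ≠ Fin.last n :=
    (hT.lt_innerShape_iff (emb p).2).1 (mem_cells.1 p.2)
  refine ⟨fun p => (T (emb p)).castPred (T_emb_ne p),
    ⟨fun p q hr hc => ?_, fun p q hc hr => ?_⟩, ?_⟩
  · exact Fin.castPred_le_castPred_iff.2 (hT.1 (emb p) (emb q) (congrArg Fin.castSucc hr) hc)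
  · exact Fin.castPred_lt_castPred_iff.2 (hT.2 (emb p) (emb q) hc hr)
  · funext ⟨⟨r, c⟩, hp⟩
    induction r using Fin.lastCases with
    | last =>
      rw [extendByLast_last]
      exact (Fin.last_le_iff.1 (hT.row_le hlam ⟨_, hp⟩)).symm
    | cast j =>
      by_cases h : (j, c) ∈ cells (innerShape T)
      · exact (extendByLast_of_mem _ h).trans (Fin.castSucc_castPred _ _)
      · rw [extendByLast_of_notMem _ h]
        rw [mem_cells, hT.lt_innerShape_iff hp, not_not] at h
        exact h.symm

end ExtendByLast

end Tableaux

section FactorialSchur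

variable {A : Type*} [CommRing A] {n : ℕ}

/-- The factorial Schur polynomial `s_λ(x | y)` evaluated at elements `x_i`, `y_k` of a
commutative ring. -/
noncomputable def factorialSchur (lam : Fin n → ℕ) (x : Fin n → A) (y : ℤ → A) : A :=
  ∑ T with IsSSYT lam T, ∏ p : cells lam, (x (T p) + y (ysub (T p) p))

theorem prod_extendByLast_eq_mul_stripWeight {lam : Fin (n + 1) → ℕ} {mu : Fin n → ℕ}
    (hmu : mu ∈ interlacing lam) (T : cells mu → Fin n) (x : Fin (n + 1) → A) (y : ℤ → A) :
    ∏ p : cells lam, (x (extendByLast T p) + y (ysub (extendByLast T p) p)) =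
      (∏ p : cells mu, (x (T p).castSucc + y (ysub (T p) p))) *
        stripWeight lam mu (x (Fin.last n)) y := by
  set w : Fin (n + 1) × ℕ → A := fun p => x (extendByLast T p) + y (ysub (extendByLast T p) p)
    with hw
  have inner_eq : ∏ p : cells mu, (x (T p).castSucc + y (ysub (T p) p)) =
      ∏ j, ∏ c ∈ range (mu j), w (j.castSucc, c) := by
    rw [← prod_cells mu fun p => w (p.1.castSucc, p.2), ← prod_coe_sort (cells mu)]
    refine prod_congr rfl fun p _ => ?_
    simp only [hw, extendByLast_of_mem T p.2, ysub, Fin.val_castSucc]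
  rw [prod_coe_sort (cells lam) w, prod_cells, inner_eq, stripWeight, Fin.prod_univ_castSucc,
    Fin.prod_univ_castSucc, ← mul_assoc, ← prod_mul_distrib]
  simp only [Fin.snoc_castSucc, Fin.snoc_last, ← range_eq_Ico]
  congr 1
  · refine prod_congr rfl fun j _ => ?_
    rw [← prod_range_mul_prod_Ico _ (mem_interlacing.1 hmu j).2]
    congr 1
    refine prod_congr rfl fun c hc => ?_
    simp only [hw, extendByLast_of_notMem T (mem_cells.not.2 (not_lt.2 (mem_Ico.1 hc).1))]
  · simp only [hw, extendByLast_last]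

theorem factorialSchur_eq_sum_interlacing {lam : Fin (n + 1) → ℕ} (hlam : Antitone lam)
    (x : Fin (n + 1) → A) (y : ℤ → A) :
    factorialSchur lam x y = ∑ mu ∈ interlacing lam,
      factorialSchur mu (x ∘ Fin.castSucc) y * stripWeight lam mu (x (Fin.last n)) y := by
  rw [factorialSchur, ← sum_fiberwise_of_maps_to (g := innerShape) (t := interlacing lam)
    fun T hT => (mem_filter.1 hT).2.innerShape_mem_interlacing hlam]
  refine sum_congr rfl fun mu hmu => ?_
  rw [factorialSchur, sum_mul]
  symm
  refine sum_bij (fun T _ p => extendByLast T p) (fun T hT => ?_)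
    (fun _ _ _ _ => extendByLast_injective hmu) (fun T hT => ?_)
    fun T _ => (prod_extendByLast_eq_mul_stripWeight hmu T x y).symm
  · have hT' := isSSYT_extendByLast hlam hmu (mem_filter.1 hT).2
    simp only [mem_filter, mem_univ, true_and]
    exact ⟨hT', innerShape_extendByLast hmu⟩
  · simp only [mem_filter, mem_univ, true_and] at hT
    obtain ⟨hT, rfl⟩ := hT
    obtain ⟨T', hT', hTT'⟩ := hT.exists_extendByLast_eq hlam
    exact ⟨T', mem_filter.2 ⟨mem_univ _, hT'⟩, hTT'⟩

theorem alternant_eq_prod_sub_mul_factorialSchur {lam : Fin n → ℕ} (hlam : Antitone lam)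
    (x : Fin n → A) (y : ℤ → A) :
    alternant lam x y = (∏ j, ∏ i ∈ Iio j, (x i - x j)) * factorialSchur lam x y := by
  induction n with
  | zero =>
    have cells_isEmpty : IsEmpty (cells lam) := ⟨fun p => p.1.1.elim0⟩
    simp [alternant, factorialSchur, IsSSYT]
  | succ n ih =>
    rw [alternant_eq_mul_sum_interlacing hlam, factorialSchur_eq_sum_interlacing hlam,
      Fin.prod_univ_castSucc, mul_sum, mul_sum]
    refine sum_congr rfl fun mu hmu => ?_
    rw [ih (antitone_of_mem_interlacing hlam hmu)]
    simp only [Fin.prod_Iio_castSucc, Fin.Iio_last_eq_map, prod_map, Fin.coe_castSuccEmb,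
      Function.comp_apply]
    ring

end FactorialSchur

section Transition

variable {A : Type*} [CommRing A]

/-- The coefficient of `(t | b)^l` in the expansion of `(t | a)^k`. -/
def newtonCoeff (a b : ℤ → A) : ℕ → ℕ → A
  | 0, 0 => 1
  | 0, _ + 1 => 0
  | k + 1, 0 => (a (k + 1) - b 1) * newtonCoeff a b k 0
  | k + 1, l + 1 => newtonCoeff a b k l + (a (k + 1) - b (l + 2)) * newtonCoeff a b k (l + 1)

theorem newtonCoeff_eq_zero_of_lt (a b : ℤ → A) {k l : ℕ} (h : k < l) :
    newtonCoeff a b k l = 0 := by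
  induction k generalizing l with
  | zero =>
    obtain ⟨l, rfl⟩ := Nat.exists_eq_succ_of_ne_zero h.ne'
    rw [newtonCoeff]
  | succ k ih =>
    obtain ⟨l, rfl⟩ := Nat.exists_eq_succ_of_ne_zero (Nat.ne_zero_of_lt h)
    rw [newtonCoeff, ih (by omega), ih (by omega), mul_zero, add_zero]

theorem newtonCoeff_diag (a b : ℤ → A) (k : ℕ) : newtonCoeff a b k k = 1 := by
  induction k with
  | zero => rw [newtonCoeff]
  | succ k ih =>
    rw [newtonCoeff, ih, newtonCoeff_eq_zero_of_lt a b k.lt_succ_self, mul_zero, add_zero]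

theorem newtonCoeff_self (a : ℤ → A) (k l : ℕ) :
    newtonCoeff a a k l = if k = l then 1 else 0 := by
  induction k generalizing l with
  | zero => cases l <;> simp [newtonCoeff]
  | succ k ih =>
    rcases l with _ | l
    · cases k <;> simp [newtonCoeff.eq_3, ih]
    · rcases eq_or_ne k (l + 1) with rfl | h
      · simp [newtonCoeff, ih, add_assoc, one_add_one_eq_two]
      · simp [newtonCoeff, ih, h]

theorem newtonCoeff_neg (a b : ℤ → A) (k l : ℕ) :
    newtonCoeff (-a) (-b) k l = (-1) ^ (k + l) * newtonCoeff a b k l := by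
  induction k generalizing l with
  | zero => cases l <;> simp [newtonCoeff]
  | succ k ih =>
    cases l <;>
    · simp only [newtonCoeff, ih, Pi.neg_apply]
      ring

theorem factorialPower_eq_sum_newtonCoeff {B : Type*} [CommRing B] [Algebra A B] (a b : ℤ → A)
    (k : ℕ) (t : B) :
    factorialPower (algebraMap A B ∘ a) k t =
      ∑ l ∈ range (k + 1), newtonCoeff a b k l • factorialPower (algebraMap A B ∘ b) l t := by
  induction k with
  | zero => simp [newtonCoeff]
  | succ k ih =>
    have smul_mul (l : ℕ) :
        newtonCoeff a b k l • factorialPower (algebraMap A B ∘ b) l t *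
          (t + algebraMap A B (a (k + 1))) =
        newtonCoeff a b k l • factorialPower (algebraMap A B ∘ b) (l + 1) t +
          ((a (k + 1) - b (l + 1)) * newtonCoeff a b k l) •
            factorialPower (algebraMap A B ∘ b) l t := by
      simp only [factorialPower_succ, Algebra.smul_def, map_mul, map_sub, Function.comp_apply]
      ring
    rw [factorialPower_succ, ih, sum_mul, sum_range_succ' _ (k + 1)]
    simp only [Function.comp_apply, smul_mul, newtonCoeff, add_smul, sum_add_distrib, add_assoc]
    congr 1
    rw [sum_range_succ' _ k, sum_range_succ _ k, newtonCoeff_eq_zero_of_lt a b k.lt_succ_self]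
    simp [add_assoc, one_add_one_eq_two]

/-- The linear functional on polynomials in `t` taking the coefficient of `(t | b)^l`. -/
noncomputable def newtonFunctional (b : ℤ → A) (l : ℕ) : Polynomial A →ₗ[A] A :=
  (Polynomial.basisMonomials A).constr A fun k => newtonCoeff 0 b k l

theorem newtonFunctional_X_pow (b : ℤ → A) (k l : ℕ) :
    newtonFunctional b l (Polynomial.X ^ k) = newtonCoeff 0 b k l := by
  have basis_eq : Polynomial.X ^ k = Polynomial.basisMonomials A k := by
    simp only [Polynomial.coe_basisMonomials, Polynomial.monomial_one_right_eq_X_pow]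
  rw [newtonFunctional, basis_eq, Module.Basis.constr_basis]

theorem newtonFunctional_zero_X_mul (b : ℤ → A) (p : Polynomial A) :
    newtonFunctional b 0 (Polynomial.X * p) = -b 1 * newtonFunctional b 0 p := by
  induction p using Polynomial.induction_on' with
  | add p q hp hq => rw [mul_add, map_add, map_add, hp, hq, mul_add]
  | monomial k r =>
    rw [← Polynomial.smul_X_eq_monomial, mul_smul_comm, ← pow_succ', map_smul, map_smul,
      newtonFunctional_X_pow, newtonFunctional_X_pow, newtonCoeff, Pi.zero_apply, zero_sub,
      mul_smul_comm]

theorem newtonFunctional_succ_X_mul (b : ℤ → A) (l : ℕ) (p : Polynomial A) :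
    newtonFunctional b (l + 1) (Polynomial.X * p) =
      newtonFunctional b l p - b (l + 2) * newtonFunctional b (l + 1) p := by
  induction p using Polynomial.induction_on' with
  | add p q hp hq =>
    simp only [mul_add, map_add, hp, hq]
    ring
  | monomial k r =>
    simp only [← Polynomial.smul_X_eq_monomial, mul_smul_comm, ← pow_succ', map_smul,
      newtonFunctional_X_pow, newtonCoeff, Pi.zero_apply, zero_sub, smul_eq_mul]
    ring

theorem newtonFunctional_factorialPower (a b : ℤ → A) (k l : ℕ) :
    newtonFunctional b l (factorialPower (Polynomial.C ∘ a) k Polynomial.X) =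
      newtonCoeff a b k l := by
  induction k generalizing l with
  | zero =>
    rw [factorialPower_zero, ← pow_zero Polynomial.X, newtonFunctional_X_pow]
    cases l <;> simp only [newtonCoeff]
  | succ k ih =>
    rw [factorialPower_succ, mul_add, mul_comm _ Polynomial.X, mul_comm _ ((_ ∘ _) _),
      Function.comp_apply, Polynomial.C_mul', map_add, map_smul, ih]
    cases l with
    | zero =>
      rw [newtonFunctional_zero_X_mul, ih, newtonCoeff, smul_eq_mul]
      ring
    | succ l =>
      rw [newtonFunctional_succ_X_mul, ih, ih, newtonCoeff, smul_eq_mul]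
      ring

theorem sum_newtonCoeff_mul_newtonCoeff (a b c : ℤ → A) (k l : ℕ) :
    ∑ j ∈ range (k + 1), newtonCoeff a b k j * newtonCoeff b c j l = newtonCoeff a c k l := by
  have h := congrArg (newtonFunctional c l) (factorialPower_eq_sum_newtonCoeff a b k Polynomial.X)
  simp only [map_sum, map_smul, Polynomial.algebraMap_eq, newtonFunctional_factorialPower] at h
  exact h.symm

/-- The matrix whose `k`-th row expands `(t | a)^k` in the powers `(t | b)^l`, for `k, l < N`. -/
def newtonMatrix (N : ℕ) (a b : ℤ → A) : Matrix (Fin N) (Fin N) A :=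
  Matrix.of fun k l => newtonCoeff a b k l

theorem newtonMatrix_mul_newtonMatrix_swap (N : ℕ) (a b : ℤ → A) :
    newtonMatrix N a b * newtonMatrix N b a = 1 := by
  ext k l
  simp only [newtonMatrix, Matrix.mul_apply, Matrix.of_apply]
  rw [Fin.sum_univ_eq_sum_range fun j => newtonCoeff a b k j * newtonCoeff b a j l,
    ← sum_subset (range_subset_range.2 k.2) fun j _ hj => ?_, sum_newtonCoeff_mul_newtonCoeff,
    newtonCoeff_self]
  · simp only [Matrix.one_apply, Fin.ext_iff]
  · rw [newtonCoeff_eq_zero_of_lt a b (by simpa using hj), zero_mul]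

theorem det_newtonMatrix (N : ℕ) (a b : ℤ → A) : (newtonMatrix N a b).det = 1 := by
  rw [Matrix.det_of_isLowerTriangular]
  · simp only [newtonMatrix, Matrix.of_apply, newtonCoeff_diag, prod_const_one]
  · exact fun k l hkl => newtonCoeff_eq_zero_of_lt a b hkl

end Transition

section ProductFunctional

variable {A ι : Type*} [CommRing A] [Fintype ι]

/-- The tensor product of linear functionals `φ i` on polynomials in the variables `x_i`, as a
functional on polynomials in all of these variables. -/
noncomputable def prodFunctional (φ : ι → Polynomial A →ₗ[A] A) : MvPolynomial ι A →ₗ[A] A :=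
  (basisMonomials ι A).constr A fun m => ∏ i, φ i (Polynomial.X ^ m i)

theorem prodFunctional_prod_aeval (φ : ι → Polynomial A →ₗ[A] A) (p : ι → Polynomial A) :
    prodFunctional φ (∏ i, Polynomial.aeval (X i) (p i)) = ∏ i, φ i (p i) := by
  classical
  have h : (prodFunctional φ).compMultilinearMap
      ((MultilinearMap.mkPiAlgebra A ι (MvPolynomial ι A)).compLinearMap fun i =>
        (Polynomial.aeval (X i)).toLinearMap) =
      (MultilinearMap.mkPiAlgebra A ι A).compLinearMap φ := by
    refine Module.Basis.ext_multilinear (fun _ => Polynomial.basisMonomials A) fun m => ?_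
    have basis_eq : ∏ i, (X i : MvPolynomial ι A) ^ m i =
        basisMonomials ι A (Finsupp.equivFunOnFinite.symm m) := by
      rw [coe_basisMonomials]
      simp [monomial_eq, Finsupp.prod_fintype]
    simp only [LinearMap.compMultilinearMap_apply, MultilinearMap.compLinearMap_apply,
      MultilinearMap.mkPiAlgebra_apply, AlgHom.toLinearMap_apply, Polynomial.coe_basisMonomials,
      Polynomial.monomial_one_right_eq_X_pow, map_pow, Polynomial.aeval_X, basis_eq]
    rw [prodFunctional, Module.Basis.constr_basis]
    rfl
  exact DFunLike.congr_fun h p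

theorem prodFunctional_det_aeval [DecidableEq ι] (φ : ι → Polynomial A →ₗ[A] A)
    (p : ι → Polynomial A) :
    prodFunctional φ (Matrix.of fun i j => Polynomial.aeval (X i) (p j)).det =
      (Matrix.of fun i j => φ i (p j)).det := by
  rw [← Matrix.det_transpose, ← Matrix.det_transpose (Matrix.of fun i j => φ i (p j)),
    Matrix.det_apply, Matrix.det_apply, map_sum]
  refine sum_congr rfl fun σ _ => ?_
  simp only [Matrix.transpose_apply, Matrix.of_apply, Units.smul_def, map_zsmul]
  rw [prodFunctional_prod_aeval φ fun i => p (σ i)]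

end ProductFunctional

section Coefficients

variable {A : Type*} [CommRing A] {n : ℕ}

/-- The factorial Schur polynomial `s_λ(x | a)` in the variables `x_1, …, x_n`, with parameters
`a_k` in the ring of coefficients. -/
noncomputable def factorialSchurPoly (lam : Fin n → ℕ) (a : ℤ → A) : MvPolynomial (Fin n) A :=
  factorialSchur lam X (C ∘ a)

theorem prodFunctional_alternant (lam mu : Fin n → ℕ) (a b : ℤ → A) :
    prodFunctional (fun i => newtonFunctional b (betaNumbers mu i)) (alternant lam X (C ∘ a)) =
      (Matrix.of fun i j => newtonCoeff a b (betaNumbers lam i) (betaNumbers mu j)).det := by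
  have aeval_factorialPower (k : ℕ) (i : Fin n) :
      Polynomial.aeval (X i : MvPolynomial (Fin n) A)
        (factorialPower (Polynomial.C ∘ a) k Polynomial.X) = factorialPower (C ∘ a) k (X i) := by
    simp [factorialPower, algebraMap_eq]
  simp only [alternant, ← aeval_factorialPower]
  rw [prodFunctional_det_aeval, ← Matrix.det_transpose]
  simp only [newtonFunctional_factorialPower]
  rfl

theorem alternant_eq_sum_of_factorialSchurPoly_eq_sum {lam : Fin n → ℕ} (hlam : Antitone lam)
    {a b : ℤ → A} {d : (Fin n → ℕ) →₀ A} (hd : ∀ ν, d ν ≠ 0 → Antitone ν)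
    (h : factorialSchurPoly lam a = d.sum fun ν p => p • factorialSchurPoly ν b) :
    alternant lam (X : Fin n → MvPolynomial (Fin n) A) (C ∘ a) =
      d.sum fun ν p => p • alternant ν X (C ∘ b) := by
  rw [alternant_eq_prod_sub_mul_factorialSchur hlam, ← factorialSchurPoly, h, Finsupp.mul_sum]
  refine Finsupp.sum_congr fun ν hν => ?_
  rw [alternant_eq_prod_sub_mul_factorialSchur (hd ν (Finsupp.mem_support_iff.1 hν)),
    mul_smul_comm, factorialSchurPoly]

theorem coeff_eq_det_newtonCoeff {lam mu : Fin n → ℕ} (hlam : Antitone lam) (hmu : Antitone mu)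
    {a b : ℤ → A} {d : (Fin n → ℕ) →₀ A} (hd : ∀ ν, d ν ≠ 0 → Antitone ν)
    (h : factorialSchurPoly lam a = d.sum fun ν p => p • factorialSchurPoly ν b) :
    d mu = (Matrix.of fun i j => newtonCoeff a b (betaNumbers lam i) (betaNumbers mu j)).det := by
  have hsum := congrArg (prodFunctional fun i => newtonFunctional b (betaNumbers mu i))
    (alternant_eq_sum_of_factorialSchurPoly_eq_sum hlam hd h)
  rw [prodFunctional_alternant, map_finsuppSum] at hsum
  have dual_basis (ν : Fin n → ℕ) (hν : ν ∈ d.support) :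
      prodFunctional (fun i => newtonFunctional b (betaNumbers mu i))
        (d ν • alternant ν X (C ∘ b)) = if ν = mu then d ν else 0 := by
    have hν_anti := strictAnti_betaNumbers (hd ν (Finsupp.mem_support_iff.1 hν))
    simp only [map_smul, prodFunctional_alternant, newtonCoeff_self,
      det_of_ite_eq hν_anti (strictAnti_betaNumbers hmu), betaNumbers_injective.eq_iff, smul_eq_mul,
      mul_ite, mul_one, mul_zero]
  rw [hsum, Finsupp.sum, sum_congr rfl dual_basis, sum_ite_eq']
  simp

end Coefficients

section Complement

variable {n m : ℕ} {lam : Fin n → ℕ}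

theorem lt_card_filter_le_iff (hlam : Antitone lam) (v : ℕ) (i : Fin n) :
    (i : ℕ) < #{k | v ≤ lam k} ↔ v ≤ lam i := by
  constructor
  · contrapose!
    intro hv
    have hsub : univ.filter (fun k => v ≤ lam k) ⊆ Iio i := fun k hk => mem_Iio.2 <| by
      by_contra! hik
      exact (((mem_filter.1 hk).2.trans (hlam hik)).trans_lt hv).false
    exact (card_le_card hsub).trans_eq (Fin.card_Iio i)
  · intro hv
    have hsub : Iic i ⊆ univ.filter fun k => v ≤ lam k := fun k hk =>
      mem_filter.2 ⟨mem_univ k, hv.trans (hlam (mem_Iic.1 hk))⟩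
    exact Nat.lt_of_succ_le ((Fin.card_Iic i).symm.trans_le (card_le_card hsub))

theorem antitone_conjComp (n m : ℕ) (lam : Fin n → ℕ) : Antitone (conjComp n m lam) :=
  fun _ _ hij => Nat.sub_le_sub_left (card_le_card <| monotone_filter_right _ fun _ _ h =>
    (Nat.sub_le_sub_left (Fin.le_def.1 hij) m).trans h) n

theorem betaNumbers_ne_betaNumbers_conjComp (hlam : Antitone lam) (i : Fin n) (j : Fin m) :
    betaNumbers lam i ≠ betaNumbers (conjComp n m lam) j := by
  have hcard : #{k | m - (j : ℕ) ≤ lam k} ≤ n := card_finset_fin_le _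
  have hiff := lt_card_filter_le_iff hlam (m - j) i
  simp only [betaNumbers, conjComp, Fin.val_rev]
  omega

-- The beta numbers of `λ` and of its complement are the positions of the vertical and horizontal
-- steps of the boundary path of `λ` in the `n × m` rectangle.
theorem exists_equiv_betaNumbers (hlam : Antitone lam) (hlamm : ∀ i, lam i ≤ m) :
    ∃ e : Fin n ⊕ Fin m ≃ Fin (n + m), (∀ i, (e (Sum.inl i) : ℕ) = betaNumbers lam i) ∧
      ∀ j, (e (Sum.inr j) : ℕ) = betaNumbers (conjComp n m lam) j := by
  have inl_lt (i : Fin n) : betaNumbers lam i < n + m := by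
    have lam_le := hlamm i
    simp only [betaNumbers, Fin.val_rev]
    omega
  have inr_lt (j : Fin m) : betaNumbers (conjComp n m lam) j < n + m := by
    simp only [betaNumbers, conjComp, Fin.val_rev]
    omega
  set e : Fin n ⊕ Fin m → Fin (n + m) :=
    Sum.elim (fun i => ⟨_, inl_lt i⟩) fun j => ⟨_, inr_lt j⟩
  have e_injective : Function.Injective e := by
    refine Function.Injective.sumElim (fun i i' h => ?_) (fun j j' h => ?_) fun i j h => ?_
    · exact (strictAnti_betaNumbers hlam).injective (Fin.ext_iff.1 h)
    · exact (strictAnti_betaNumbers (antitone_conjComp n m lam)).injective (Fin.ext_iff.1 h)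
    · exact betaNumbers_ne_betaNumbers_conjComp hlam i j (Fin.ext_iff.1 h)
  have e_bijective := (Fintype.bijective_iff_injective_and_card e).2 ⟨e_injective, by simp⟩
  exact ⟨Equiv.ofBijective e e_bijective, fun _ => rfl, fun _ => rfl⟩

end Complement

theorem change_of_basis_d_eq_c_complement_general {A : Type*} [CommRing A] {n m : ℕ}
    {lam mu : Fin n → ℕ} (hlam : IsPartition lam) (hmu : IsPartition mu)
    (hlamm : ∀ i, lam i ≤ m) (hmum : ∀ i, mu i ≤ m) (a b : ℤ → A)
    {d : (Fin n → ℕ) →₀ A} (hdsupp : ∀ ν, d ν ≠ 0 → IsPartition ν)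
    (hdexp : factorialSchurPoly lam a = d.sum fun ν p => p • factorialSchurPoly ν b)
    {c : (Fin m → ℕ) →₀ A} (hcsupp : ∀ ν, c ν ≠ 0 → IsPartition ν)
    (hcexp : factorialSchurPoly (conjComp n m mu) (-b) =
      c.sum fun ν p => p • factorialSchurPoly ν (-a)) :
    d mu = c (conjComp n m lam) := by
  obtain ⟨e, e_inl, e_inr⟩ := exists_equiv_betaNumbers hlam hlamm
  obtain ⟨f, f_inl, f_inr⟩ := exists_equiv_betaNumbers hmu hmum
  have strictAnti_of_val {ι : Type} [Preorder ι] {g : ι → Fin (n + m)} {β : ι → ℕ}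
      (h : ∀ i, (g i : ℕ) = β i) (hβ : StrictAnti β) : StrictAnti g := fun i j hij =>
    Fin.lt_def.2 (by rw [h, h]; exact hβ hij)
  have hjacobi := jacobi_complementary_minor_checkerboard (det_newtonMatrix (n + m) b a)
    (newtonMatrix_mul_newtonMatrix_swap (n + m) b a)
    (strictAnti_of_val e_inl (strictAnti_betaNumbers hlam))
    (strictAnti_of_val e_inr (strictAnti_betaNumbers (antitone_conjComp n m lam)))
    (strictAnti_of_val f_inl (strictAnti_betaNumbers hmu))
    (strictAnti_of_val f_inr (strictAnti_betaNumbers (antitone_conjComp n m mu)))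
  rw [coeff_eq_det_newtonCoeff hlam hmu hdsupp hdexp, coeff_eq_det_newtonCoeff
    (antitone_conjComp n m mu) (antitone_conjComp n m lam) hcsupp hcexp]
  simpa only [newtonMatrix, Matrix.submatrix, Matrix.of_apply, Function.comp_apply, e_inl, e_inr,
    f_inl, f_inr, newtonCoeff_neg] using hjacobi

section Specialization

variable {A : Type*} [CommRing A] {n : ℕ}

/-- The specialization of the variables `y_k` to elements of a ring `A`. -/
noncomputable def specializeY (y : ℤ → A) :
    MvPolynomial (Fin n ⊕ ℤ) ℤ →ₐ[ℤ] MvPolynomial (Fin n) A :=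
  aeval (Sum.elim X (C ∘ y))

theorem specializeY_schurN (y : ℤ → A) (lam : Fin n → ℕ) :
    specializeY y (schurN n lam) = factorialSchurPoly lam 0 := by
  simp [specializeY, schurN, factorialSchurPoly, factorialSchur]

theorem specializeY_factSchurN (y : ℤ → A) (lam : Fin n → ℕ) :
    specializeY y (factSchurN n lam) = factorialSchurPoly lam y := by
  simp [specializeY, factSchurN, factorialSchurPoly, factorialSchur]

theorem specializeY_rename_inr (y : ℤ → A) (p : MvPolynomial ℤ ℤ) :
    specializeY (n := n) y (rename Sum.inr p) = C (aeval y p) := by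
  rw [specializeY, aeval_rename, Sum.elim_comp_inr]
  exact aeval_algebraMap_apply (MvPolynomial (Fin n) A) y p

theorem specializeY_sum_rename_mul (y : ℤ → A) (d : (Fin n → ℕ) →₀ MvPolynomial ℤ ℤ)
    (s : (Fin n → ℕ) → MvPolynomial (Fin n ⊕ ℤ) ℤ) :
    specializeY y (d.sum fun ν p => rename Sum.inr p * s ν) =
      (d.mapRange (aeval y) (map_zero _)).sum fun ν p => p • specializeY y (s ν) := by
  rw [map_finsuppSum, Finsupp.sum_mapRange_index fun ν => zero_smul A (specializeY y (s ν))]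
  simp only [map_mul, specializeY_rename_inr, smul_eq_C_mul]

theorem factorialSchurPoly_zero_eq_sum {lam : Fin n → ℕ} {d : (Fin n → ℕ) →₀ MvPolynomial ℤ ℤ}
    (h : schurN n lam = d.sum fun ν p => rename Sum.inr p * factSchurN n ν) (y : ℤ → A) :
    factorialSchurPoly lam 0 =
      (d.mapRange (aeval y) (map_zero _)).sum fun ν p => p • factorialSchurPoly ν y := by
  simpa only [specializeY_sum_rename_mul, specializeY_schurN, specializeY_factSchurN] using
    congrArg (specializeY y) h

theorem factorialSchurPoly_eq_sum {lam : Fin n → ℕ} {c : (Fin n → ℕ) →₀ MvPolynomial ℤ ℤ}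
    (h : factSchurN n lam = c.sum fun ν p => rename Sum.inr p * schurN n ν) (y : ℤ → A) :
    factorialSchurPoly lam y =
      (c.mapRange (aeval y) (map_zero _)).sum fun ν p => p • factorialSchurPoly ν 0 := by
  simpa only [specializeY_sum_rename_mul, specializeY_schurN, specializeY_factSchurN] using
    congrArg (specializeY y) h

theorem ne_zero_of_mapRange_aeval_ne_zero {y : ℤ → A} {d : (Fin n → ℕ) →₀ MvPolynomial ℤ ℤ}
    {ν : Fin n → ℕ} (h : d.mapRange (aeval y) (map_zero _) ν ≠ 0) : d ν ≠ 0 := fun h0 =>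
  h (by rw [Finsupp.mapRange_apply, h0, map_zero])

end Specialization

/-- Proposition 4.1(iii): `d_{λ,n}^μ(y) = c_{μ^c,m}^{λ^c}(-y)`,
where `λ^c, μ^c ∈ P_m` are the complements of `λ, μ` in the `n × m` rectangle. -/
theorem change_of_basis_d_eq_c_complement (n m : ℕ) (hn : 1 ≤ n) (hm : 1 ≤ m)
    (lam mu : Fin n → ℕ) (hlam : IsPartition lam) (hmu : IsPartition mu)
    (hlamm : ∀ i, lam i ≤ m) (hmum : ∀ i, mu i ≤ m)
    -- the coefficients `d_{λ,n}^ν(y)`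
    (d : (Fin n → ℕ) →₀ MvPolynomial ℤ ℤ)
    (hdsupp : ∀ ν, d ν ≠ 0 → IsPartition ν)
    (hdexp : schurN n lam = d.sum fun ν p => rename Sum.inr p * factSchurN n ν)
    -- the coefficients `c_{μ^c,m}^ν(y)`
    (c : (Fin m → ℕ) →₀ MvPolynomial ℤ ℤ)
    (hcsupp : ∀ ν, c ν ≠ 0 → IsPartition ν)
    (hcexp : factSchurN m (conjComp n m mu)
      = c.sum fun ν p => rename Sum.inr p * schurN m ν) :
    d mu = aeval (fun j : ℤ => -(X j : MvPolynomial ℤ ℤ)) (c (conjComp n m lam)) := by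
  have hc := factorialSchurPoly_eq_sum hcexp (-X : ℤ → MvPolynomial ℤ ℤ)
  rw [← neg_zero (G := ℤ → MvPolynomial ℤ ℤ)] at hc
  have h := change_of_basis_d_eq_c_complement_general hlam hmu hlamm hmum 0 X
    (fun ν hν => hdsupp ν (ne_zero_of_mapRange_aeval_ne_zero hν))
    (factorialSchurPoly_zero_eq_sum hdexp X)
    (fun ν hν => hcsupp ν (ne_zero_of_mapRange_aeval_ne_zero hν)) hc
  rw [Finsupp.mapRange_apply] at h
  exact (aeval_X_left_apply _).symm.trans h
end

section
/- Let N ≥ 1 and consider the N×N matrices over ℤ[y_1, y_2, …] given by A = ( e_{i−j}(y_1,…,y_i) )_{0≤i,j≤N−1} and B = ( h_{i−j}(−y_1,…,−y_{j+1}) )_{0≤i,j≤N−1}. Then A and B are inverse matrices: AB = BA = Id. -/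
open Finset MvPolynomial

attribute [local instance] Classical.propDecidable

/-!
Over any commutative ring put `E_p(t) = ∏_{k < p} (1 + y_k t)` and `H_p(t) = E_p(t)⁻¹`; the
coefficients of `H_p` are the complete homogeneous symmetric polynomials in the negated variables.
The `(i, k)` entry of `A * B` is the coefficient of `t ^ (i - k)` in `E_i H_{k+1}`. For `i > k` this
product is a polynomial in `t` with only `i - k - 1` linear factors, so that coefficient vanishes.
-/

open scoped PowerSeries LaurentSeries

section SymmetricSeries

variable {ι R : Type*}

section CommSemiring

variable [CommSemiring R]

/-- The generating series of the elementary symmetric polynomials in the family `f` restricted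
to `s`. -/
noncomputable def esymmSeries (s : Finset ι) (f : ι → R) : R⟦X⟧ :=
  PowerSeries.mk fun n => ∑ t ∈ s.powersetCard n, ∏ i ∈ t, f i

/-- The generating series of the complete homogeneous symmetric polynomials in the family `f`
restricted to `s`; a monomial of degree `n` is indexed by the multiset `m : Sym ι n` of its
variables. -/
noncomputable def hsymmSeries [DecidableEq ι] (s : Finset ι) (f : ι → R) : R⟦X⟧ :=
  PowerSeries.mk fun n => ∑ m ∈ s.sym n, ((m : Multiset ι).map f).prod

lemma esymmSeries_eq_prod (s : Finset ι) (f : ι → R) :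
    esymmSeries s f = ∏ i ∈ s, (1 + PowerSeries.C (f i) * PowerSeries.X) := by
  ext n
  simp only [esymmSeries, PowerSeries.coeff_mk, Finset.prod_one_add, Finset.prod_mul_distrib,
    Finset.prod_const, ← map_prod, map_sum, PowerSeries.coeff_C_mul, PowerSeries.coeff_X_pow,
    mul_ite, mul_one, mul_zero, ← Finset.sum_filter, Finset.powersetCard_eq_filter, eq_comm]

lemma coeff_zero_esymmSeries (s : Finset ι) (f : ι → R) :
    PowerSeries.coeff 0 (esymmSeries s f) = 1 := by
  simp [esymmSeries]

lemma coeff_esymmSeries_of_card_lt {s : Finset ι} {n : ℕ} (h : #s < n) (f : ι → R) :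
    PowerSeries.coeff n (esymmSeries s f) = 0 := by
  rw [esymmSeries, PowerSeries.coeff_mk, Finset.powersetCard_eq_empty.2 h, Finset.sum_empty]

variable [DecidableEq ι]

lemma coeff_zero_hsymmSeries (s : Finset ι) (f : ι → R) :
    PowerSeries.coeff 0 (hsymmSeries s f) = 1 := by
  simp only [hsymmSeries, PowerSeries.coeff_mk, Finset.sym_zero, Finset.sum_singleton]
  exact Multiset.prod_zero

lemma sum_sym_insert {M : Type*} [AddCommMonoid M] {a : ι} {s : Finset ι} (ha : a ∉ s) (n : ℕ)
    (g : Sym ι (n + 1) → M) :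
    ∑ m ∈ (insert a s).sym (n + 1), g m =
      ∑ m ∈ s.sym (n + 1), g m + ∑ m ∈ (insert a s).sym n, g (a ::ₛ m) := by
  have without_a : {m ∈ (insert a s).sym (n + 1) | a ∉ m} = s.sym (n + 1) := by
    ext m
    simp only [Finset.mem_filter, Finset.mem_sym_iff, Finset.mem_insert]
    grind
  have with_a : {m ∈ (insert a s).sym (n + 1) | a ∈ m} =
      ((insert a s).sym n).image (a ::ₛ ·) := by
    ext m
    simp only [Finset.mem_filter, Finset.mem_image, Finset.mem_sym_iff]
    constructor
    · rintro ⟨hm, ham⟩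
      obtain ⟨m, rfl⟩ := Sym.exists_cons_of_mem ham
      exact ⟨m, fun b hb => hm b (Sym.mem_cons_of_mem hb), rfl⟩
    · rintro ⟨m, hm, rfl⟩
      simpa using hm
  rw [← Finset.sum_filter_not_add_sum_filter _ (a ∈ ·), without_a, with_a,
    Finset.sum_image fun _ _ _ _ h => (Sym.cons_inj_right _ _ _).1 h]

lemma hsymmSeries_empty (f : ι → R) : hsymmSeries ∅ f = 1 := by
  ext (_ | n)
  · rw [coeff_zero_hsymmSeries, PowerSeries.coeff_zero_one]
  · simp [hsymmSeries, PowerSeries.coeff_one]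

end CommSemiring

variable [CommRing R] [DecidableEq ι]

lemma hsymmSeries_insert_mul {a : ι} {s : Finset ι} (ha : a ∉ s) (f : ι → R) :
    hsymmSeries (insert a s) f * (1 - PowerSeries.C (f a) * PowerSeries.X) = hsymmSeries s f := by
  rw [mul_sub, mul_one, sub_eq_iff_eq_add, mul_left_comm]
  ext (_ | n)
  · rw [map_add, PowerSeries.coeff_C_mul, PowerSeries.coeff_zero_mul_X, mul_zero, add_zero,
      coeff_zero_hsymmSeries, coeff_zero_hsymmSeries]
  · rw [map_add, PowerSeries.coeff_C_mul, PowerSeries.coeff_succ_mul_X]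
    simp only [hsymmSeries, PowerSeries.coeff_mk, sum_sym_insert ha, Sym.coe_cons,
      Multiset.map_cons, Multiset.prod_cons, Finset.mul_sum]

lemma hsymmSeries_mul_prod (s : Finset ι) (f : ι → R) :
    hsymmSeries s f * ∏ i ∈ s, (1 - PowerSeries.C (f i) * PowerSeries.X) = 1 := by
  induction s using Finset.induction_on with
  | empty => rw [hsymmSeries_empty, Finset.prod_empty, one_mul]
  | insert a s ha ih => rw [Finset.prod_insert ha, ← mul_assoc, hsymmSeries_insert_mul ha, ih]

lemma hsymmSeries_neg_mul_esymmSeries (s : Finset ι) (f : ι → R) :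
    hsymmSeries s (-f) * esymmSeries s f = 1 := by
  simpa [esymmSeries_eq_prod] using hsymmSeries_mul_prod s (-f)

lemma esymmSeries_mul_hsymmSeries_neg {s t : Finset ι} (h : s ⊆ t) (f : ι → R) :
    esymmSeries t f * hsymmSeries s (-f) = esymmSeries (t \ s) f := by
  have split : esymmSeries t f = esymmSeries (t \ s) f * esymmSeries s f := by
    simp only [esymmSeries_eq_prod, Finset.prod_sdiff h]
  rw [split, mul_assoc, mul_comm (esymmSeries s f), hsymmSeries_neg_mul_esymmSeries, mul_one]

end SymmetricSeries

section Convolution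

variable {R : Type*}

lemma laurent_coeff_natCast_sub [Semiring R] (φ : R⟦X⟧) (i j : ℕ) :
    (φ : R⸨X⸩).coeff ((i : ℤ) - j) = if j ≤ i then PowerSeries.coeff (i - j) φ else 0 := by
  rw [PowerSeries.coeff_coe]
  split_ifs
  · omega
  · rfl
  · congr
    omega
  · omega

lemma sum_laurent_coeff_mul_laurent_coeff [Semiring R] (φ ψ : R⟦X⟧) {i N : ℕ} (hi : i < N)
    (k : ℕ) :
    ∑ j : Fin N, (φ : R⸨X⸩).coeff ((i : ℤ) - (j : ℕ)) * (ψ : R⸨X⸩).coeff (((j : ℕ) : ℤ) - k) =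
      ((φ * ψ : R⟦X⟧) : R⸨X⸩).coeff ((i : ℤ) - k) := by
  have window : {j ∈ range N | j ≤ i ∧ k ≤ j} = Finset.Icc k i := by
    ext j
    simp only [Finset.mem_filter, Finset.mem_range, Finset.mem_Icc]
    omega
  rw [Fin.sum_univ_eq_sum_range fun j : ℕ =>
    (φ : R⸨X⸩).coeff ((i : ℤ) - j) * (ψ : R⸨X⸩).coeff ((j : ℤ) - k)]
  simp only [laurent_coeff_natCast_sub, ite_zero_mul_ite_zero, ← Finset.sum_filter, window]
  split_ifs with hki
  · rw [PowerSeries.coeff_mul]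
    refine Finset.sum_nbij' (fun j => (i - j, j - k)) (fun m => k + m.2) ?_ ?_ ?_ ?_ ?_ <;>
      simp only [Finset.mem_Icc, Finset.HasAntidiagonal.mem_antidiagonal, Prod.forall,
        Prod.mk.injEq]
    all_goals grind
  · rw [Finset.Icc_eq_empty hki, Finset.sum_empty]

end Convolution

-- On the left, as in `eY`, Lean elaborates `k : ℤ`, coercing `range p` to a `Finset ℤ` by a monadic
-- lift of the cast `ℕ → ℤ`.
lemma image_add_one_range (p : ℕ) :
    ((Finset.range p).image fun k => (k + 1 : ℤ)) =
      (Finset.range p).map (Nat.castEmbedding.trans (addRightEmbedding (1 : ℤ))) := by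
  ext a
  simp [Finset.bind_def, ← sub_eq_add_neg, eq_sub_iff_add_eq]

lemma eY_eq_coeff_esymmSeries (p : ℕ) (d : ℤ) :
    eY p d = (esymmSeries (range p) fun k : ℕ => (X (k + 1 : ℤ) : MvPolynomial ℤ ℤ) :
      (MvPolynomial ℤ ℤ)⸨X⸩).coeff d := by
  rw [eY, PowerSeries.coeff_coe]
  rcases lt_or_ge d 0 with hd | hd
  · rw [if_neg hd.not_ge, if_pos hd]
  · lift d to ℕ using hd
    rw [image_add_one_range]
    simp [esymmSeries, Finset.powersetCard_map]

lemma hYneg_eq_coeff_hsymmSeries (p : ℕ) (d : ℤ) :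
    hYneg p d = (hsymmSeries (range p) (-fun k : ℕ => (X (k + 1 : ℤ) : MvPolynomial ℤ ℤ)) :
      (MvPolynomial ℤ ℤ)⸨X⸩).coeff d := by
  rw [hYneg, PowerSeries.coeff_coe]
  rcases lt_or_ge d 0 with hd | hd
  · rw [if_neg hd.not_ge, if_pos hd]
  · lift d to ℕ using hd
    simp [hsymmSeries]

theorem eh_matrices_inverse_general {R : Type*} [CommRing R] (y : ℕ → R) (N : ℕ) :
    (Matrix.of fun i j : Fin N => (esymmSeries (range i) y : R⸨X⸩).coeff ((i : ℤ) - (j : ℕ))) *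
        (Matrix.of fun i j : Fin N =>
          (hsymmSeries (range (j + 1)) (-y) : R⸨X⸩).coeff ((i : ℤ) - (j : ℕ))) = 1 ∧
    (Matrix.of fun i j : Fin N =>
          (hsymmSeries (range (j + 1)) (-y) : R⸨X⸩).coeff ((i : ℤ) - (j : ℕ))) *
        (Matrix.of fun i j : Fin N =>
          (esymmSeries (range i) y : R⸨X⸩).coeff ((i : ℤ) - (j : ℕ))) = 1 := by
  refine (and_iff_left_of_imp mul_eq_one_comm.1).2 ?_
  ext i k
  simp only [Matrix.mul_apply, Matrix.of_apply]
  rw [sum_laurent_coeff_mul_laurent_coeff _ _ i.2, laurent_coeff_natCast_sub]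
  rcases lt_trichotomy i k with hik | rfl | hki
  · rw [if_neg (by simpa using hik), Matrix.one_apply_ne hik.ne]
  · rw [if_pos le_rfl, Nat.sub_self, PowerSeries.coeff_mul, Finset.Nat.antidiagonal_zero,
      Finset.sum_singleton, coeff_zero_esymmSeries, coeff_zero_hsymmSeries, one_mul,
      Matrix.one_apply_eq]
  · have hsub : range (k + 1) ⊆ range i := Finset.range_subset_range.2 hki
    have hcard : #(range (i : ℕ) \ range (k + 1)) < (i : ℕ) - k := by
      rw [Finset.card_sdiff_of_subset hsub, Finset.card_range, Finset.card_range]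
      omega
    rw [if_pos (by simpa using hki.le), esymmSeries_mul_hsymmSeries_neg hsub,
      coeff_esymmSeries_of_card_lt hcard, Matrix.one_apply_ne hki.ne']

/-- Lemma 4.2: the matrices
`A = (e_{i-j}(y_1,…,y_i))_{0 ≤ i,j ≤ N-1}` and
`B = (h_{i-j}(-y_1,…,-y_{j+1}))_{0 ≤ i,j ≤ N-1}` are inverse to each other. -/
theorem eh_matrices_inverse (N : ℕ) (hN : 1 ≤ N) :
    (Matrix.of fun i j : Fin N => eY (i : ℕ) ((i : ℕ) - (j : ℕ) : ℤ)) *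
        (Matrix.of fun i j : Fin N => hYneg ((j : ℕ) + 1) ((i : ℕ) - (j : ℕ) : ℤ)) = 1 ∧
    (Matrix.of fun i j : Fin N => hYneg ((j : ℕ) + 1) ((i : ℕ) - (j : ℕ) : ℤ)) *
        (Matrix.of fun i j : Fin N => eY (i : ℕ) ((i : ℕ) - (j : ℕ) : ℤ)) = 1 := by
  simpa only [eY_eq_coeff_esymmSeries, hYneg_eq_coeff_hsymmSeries] using
    eh_matrices_inverse_general (fun k : ℕ => (X (k + 1 : ℤ) : MvPolynomial ℤ ℤ)) N
end
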